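/- arXiv:2403.17193 — 2 statements merged into one kernel-verified Lean document; each statement's English description precedes it below -/
import Mathlib

section
/- Every nonzero 2-dimensional anti-pre-Lie algebra over ℂ is isomorphic to exactly one of the following algebras, given by a multiplication table on a basis e1, e2 (all unlisted products of basis elements are zero): A01: e1∘e1 = e1, e2∘e2 = e2; A02: e1∘e1 = e1, e1∘e2 = e2, e2∘e1 = e2; A03: e1∘e1 = e1; A04: e1∘e1 = e2; A05: e1∘e1 = −e2, e2∘e1 = −e1; A06^λ (λ ∈ ℂ): e2∘e1 = −e1, e2∘e2 = λ·e2; A07: e2∘e1 = −e1, e2∘e2 = e1 − e2; A08^λ (λ ∈ ℂ, λ ≠ −1): e1∘e2 = (λ+1)·e1, e2∘e1 = λ·e1, e2∘e2 = (λ−1)·e2; A09: e1∘e2 = −e1, e2∘e1 = −2·e1, e2∘e2 = e1 − 3·e2. -/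
noncomputable section

/-- The 2-dimensional complex vector space. -/
abbrev V2 : Type := Fin 2 → ℂ

/-- The bilinear multiplication on `V2` determined by a table of structure constants:
`c i j` is the product of the `i`-th and `j`-th basis vectors. -/
def tm (c : Fin 2 → Fin 2 → V2) : V2 → V2 → V2 :=
  fun x y => ∑ i, ∑ j, (x i * y j) • c i j

/-- Multiplication table with the given values of `e1*e1`, `e1*e2`, `e2*e1`, `e2*e2`. -/
def tbl (a b c d : V2) : Fin 2 → Fin 2 → V2 := ![![a, b], ![c, d]]

/-- The zero multiplication on `V2`. -/
def zm : V2 → V2 → V2 := fun _ _ => 0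

/-- Isomorphism of algebras with one multiplication: a ℂ-linear bijection preserving
the multiplication. -/
def Iso1 {A : Type*} [AddCommGroup A] [Module ℂ A] {B : Type*} [AddCommGroup B]
    [Module ℂ B] (μ : A → A → A) (ν : B → B → B) : Prop :=
  ∃ φ : A ≃ₗ[ℂ] B, ∀ x y, φ (μ x y) = ν (φ x) (φ y)

/-- Isomorphism of algebras with two multiplications: a ℂ-linear bijection preserving
both multiplications. -/
def Iso2 {A : Type*} [AddCommGroup A] [Module ℂ A] {B : Type*} [AddCommGroup B]
    [Module ℂ B] (μ₁ μ₂ : A → A → A) (ν₁ ν₂ : B → B → B) : Prop :=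
  ∃ φ : A ≃ₗ[ℂ] B,
    (∀ x y, φ (μ₁ x y) = ν₁ (φ x) (φ y)) ∧ (∀ x y, φ (μ₂ x y) = ν₂ (φ x) (φ y))

/-- The commutative associative algebra A01: `e1·e1 = e1`, `e2·e2 = e2`. -/
def cA01 : Fin 2 → Fin 2 → V2 := tbl ![1,0] 0 0 ![0,1]

/-- The commutative associative algebra A02: `e1·e1 = e1`, `e1·e2 = e2·e1 = e2`. -/
def cA02 : Fin 2 → Fin 2 → V2 := tbl ![1,0] ![0,1] ![0,1] 0

/-- The commutative associative algebra A03: `e1·e1 = e1`. -/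
def cA03 : Fin 2 → Fin 2 → V2 := tbl ![1,0] 0 0 0

/-- The commutative associative algebra A04: `e1·e1 = e2`. -/
def cA04 : Fin 2 → Fin 2 → V2 := tbl ![0,1] 0 0 0

/-- Index of the nonzero 2-dimensional anti-pre-Lie algebras A01–A09. -/
inductive APIdx : Type
  | a01 | a02 | a03 | a04 | a05
  | a06 (lam : ℂ)
  | a07
  | a08 (lam : ℂ) (h : lam ≠ -1)
  | a09

/-- The multiplication tables of the nonzero 2-dimensional anti-pre-Lie algebras
A01–A09. -/
def apAlg : APIdx → Fin 2 → Fin 2 → V2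
  | .a01 => tbl ![1,0] 0 0 ![0,1]                        -- e1∘e1=e1, e2∘e2=e2
  | .a02 => tbl ![1,0] ![0,1] ![0,1] 0                   -- e1∘e1=e1, e1∘e2=e2, e2∘e1=e2
  | .a03 => tbl ![1,0] 0 0 0                             -- e1∘e1=e1
  | .a04 => tbl ![0,1] 0 0 0                             -- e1∘e1=e2
  | .a05 => tbl ![0,-1] 0 ![-1,0] 0                      -- e1∘e1=-e2, e2∘e1=-e1
  | .a06 lam => tbl 0 0 ![-1,0] ![0,lam]                 -- e2∘e1=-e1, e2∘e2=λe2
  | .a07 => tbl 0 0 ![-1,0] ![1,-1]                      -- e2∘e1=-e1, e2∘e2=e1-e2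
  | .a08 lam _ => tbl 0 ![lam+1,0] ![lam,0] ![0,lam-1]
  | .a09 => tbl 0 ![-1,0] ![-2,0] ![1,-3]

/-- The coordinate equations saying that the matrix with columns `![p, q]` and `![r, s]`
is an isomorphism between two multiplication tables. -/
theorem exists_matrix_of_iso1 {c d : Fin 2 → Fin 2 → V2} (h : Iso1 (tm c) (tm d)) :
    ∃ p q r s : ℂ, p * s - q * r ≠ 0 ∧
      c 0 0 0 • ![p, q] + c 0 0 1 • ![r, s] = tm d ![p, q] ![p, q] ∧
      c 0 1 0 • ![p, q] + c 0 1 1 • ![r, s] = tm d ![p, q] ![r, s] ∧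
      c 1 0 0 • ![p, q] + c 1 0 1 • ![r, s] = tm d ![r, s] ![p, q] ∧
      c 1 1 0 • ![p, q] + c 1 1 1 • ![r, s] = tm d ![r, s] ![r, s] := by
  obtain ⟨φ, hφ⟩ := h
  obtain ⟨p, q, hu⟩ : ∃ p q, φ ![1, 0] = ![p, q] :=
    ⟨φ ![1, 0] 0, φ ![1, 0] 1, by ext k; fin_cases k <;> rfl⟩
  obtain ⟨r, s, hv⟩ : ∃ r s, φ ![0, 1] = ![r, s] :=
    ⟨φ ![0, 1] 0, φ ![0, 1] 1, by ext k; fin_cases k <;> rfl⟩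
  have key : ∀ x : V2, φ x = x 0 • ![p, q] + x 1 • ![r, s] := by
    intro x
    rw [← hu, ← hv, ← map_smul, ← map_smul, ← map_add]
    congr 1
    ext k; fin_cases k <;> simp
  refine ⟨p, q, r, s, fun h0 => ?_, ?_, ?_, ?_, ?_⟩
  · have h1 : φ ![s, -q] = 0 := by
      rw [key]; ext k; fin_cases k <;> simp <;> grind
    have h2 : φ ![r, -p] = 0 := by
      rw [key]; ext k; fin_cases k <;> simp <;> grind
    rw [map_eq_zero_iff φ φ.injective] at h1 h2
    have hq : q = 0 := by simpa using congrFun h1 1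
    have hp : p = 0 := by simpa using congrFun h2 1
    have h3 : φ ![1, 0] = 0 := by rw [hu, hp, hq]; simp
    rw [map_eq_zero_iff φ φ.injective] at h3
    simpa using congrFun h3 0
  · rw [← key, ← hu, ← hφ]; simp [tm]
  · rw [← key, ← hu, ← hv, ← hφ]; simp [tm]
  · rw [← key, ← hu, ← hv, ← hφ]; simp [tm]
  · rw [← key, ← hv, ← hφ]; simp [tm]

set_option maxHeartbeats 4000000 in
/-- Distinct indices give nonisomorphic algebras. -/
theorem apAlg_eq_of_iso1 (i j : APIdx) (h : Iso1 (tm (apAlg i)) (tm (apAlg j))) : i = j := by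
  obtain ⟨p, q, r, s, hdet, h11, h12, h21, h22⟩ := exists_matrix_of_iso1 h
  have a0 := congrFun h11 0
  have a1 := congrFun h11 1
  have b0 := congrFun h12 0
  have b1 := congrFun h12 1
  have c0 := congrFun h21 0
  have c1 := congrFun h21 1
  have d0 := congrFun h22 0
  have d1 := congrFun h22 1
  clear h11 h12 h21 h22 h
  cases i <;> cases j <;>
    simp [apAlg, tm, tbl, Fin.sum_univ_two] at a0 a1 b0 b1 c0 c1 d0 d1 ⊢ <;> grind

section Existence

variable {A : Type*} [AddCommGroup A] [Module ℂ A]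

theorem exists_coords_of_pair (hdim : Module.finrank ℂ A = 2) {u v : A}
    (huv : LinearIndependent ℂ ![u, v]) (x : A) : ∃ a b : ℂ, x = a • u + b • v := by
  let e := basisOfLinearIndependentOfCardEqFinrank huv (by simp [hdim])
  have h := e.sum_repr x
  rw [Fin.sum_univ_two] at h
  exact ⟨_, _, by simpa [e] using h.symm⟩

theorem exists_linearIndependent_pair (hdim : Module.finrank ℂ A = 2) {u : A} (hu : u ≠ 0) :
    ∃ v : A, LinearIndependent ℂ ![u, v] := by
  by_contra! h
  have h1 : ∀ v : A, ∃ a : ℂ, a • u = v := fun v => by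
    simpa [LinearIndependent.pair_iff' hu] using h v
  have h2 := finrank_le_one u h1
  omega

/-- An algebra with a basis `u, v` is isomorphic to its multiplication table. -/
theorem iso1_tbl_of_pair (hdim : Module.finrank ℂ A = 2) (circ : A →ₗ[ℂ] A →ₗ[ℂ] A) {u v : A}
    (huv : LinearIndependent ℂ ![u, v]) {a b c d : V2}
    (h11 : circ u u = a 0 • u + a 1 • v) (h12 : circ u v = b 0 • u + b 1 • v)
    (h21 : circ v u = c 0 • u + c 1 • v) (h22 : circ v v = d 0 • u + d 1 • v) :
    Iso1 (fun x y => circ x y) (tm (tbl a b c d)) := by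
  let e := basisOfLinearIndependentOfCardEqFinrank huv (by simp [hdim])
  have hu : e.equivFun u = ![1, 0] := by
    have h : e 0 = u := by simp [e]
    ext k; fin_cases k <;> simp [← h]
  have hv : e.equivFun v = ![0, 1] := by
    have h : e 1 = v := by simp [e]
    ext k; fin_cases k <;> simp [← h]
  refine ⟨e.equivFun, fun x y => ?_⟩
  obtain ⟨x0, x1, rfl⟩ := exists_coords_of_pair hdim huv x
  obtain ⟨y0, y1, rfl⟩ := exists_coords_of_pair hdim huv y
  simp only [map_add, map_smul, LinearMap.add_apply, LinearMap.smul_apply, h11, h12, h21, h22,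
    hu, hv]
  ext k; fin_cases k <;> simp [tm, tbl, Fin.sum_univ_two] <;> ring

theorem linearIndependent_of_not_commute (circ : A →ₗ[ℂ] A →ₗ[ℂ] A) {u v : A}
    (h : circ u v ≠ circ v u) :
    LinearIndependent ℂ ![u, v] := by
  have hu : u ≠ 0 := by rintro rfl; simp at h
  rw [LinearIndependent.pair_iff' hu]
  rintro a rfl
  simp at h

/-- The noncommutative case, in a basis with `u∘v - v∘u = u`. -/
theorem exists_iso1_of_bracket_eq (hdim : Module.finrank ℂ A = 2) (circ : A →ₗ[ℂ] A →ₗ[ℂ] A)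
    (hap : ∀ x y z : A, circ x (circ y z) - circ y (circ x z) = circ (circ y x - circ x y) z)
    {u v : A} (hu : u ≠ 0) (hbr : circ u v - circ v u = u) :
    ∃ i : APIdx, Iso1 (fun x y => circ x y) (tm (apAlg i)) := by
  have hli : LinearIndependent ℂ ![u, v] :=
    linearIndependent_of_not_commute circ fun h => hu (by rw [← hbr, h, sub_self])
  have hli' : ∀ {k t : ℂ}, k ≠ 0 → LinearIndependent ℂ ![k • u, t • u + v] := fun {k t} hk => by
    have h := (LinearIndependent.pair_add_smul_add_smul_iff (x := u) (y := v) k 0 t 1).2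
      ⟨hli, by simpa using hk⟩
    simpa using h
  obtain ⟨a, c, huu⟩ := exists_coords_of_pair hdim hli (circ u u)
  obtain ⟨b, d, huv⟩ := exists_coords_of_pair hdim hli (circ u v)
  obtain ⟨f, g, hvv⟩ := exists_coords_of_pair hdim hli (circ v v)
  have hvu : circ v u = (b - 1) • u + d • v := by
    rw [huv] at hbr
    linear_combination (norm := module) -hbr
  have h1 := hap u v u
  have h2 := hap u v v
  simp only [map_add, map_sub, map_smul, LinearMap.add_apply, LinearMap.sub_apply,
    LinearMap.smul_apply, huu, huv, hvu, hvv] at h1 h2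
  obtain ⟨e1, e2⟩ := hli.eq_zero_of_pair (s := f * c - b * d - a) (t := c * (g - b) + a * d - d ^ 2)
    (by linear_combination (norm := module) -h1)
  obtain ⟨e3, e4⟩ := hli.eq_zero_of_pair (s := a * f + b * g - b * (b - 1) - d * f + b)
    (t := c * f - b * d + d)
    (by linear_combination (norm := module) h2)
  have change : ∀ (i : APIdx) (k t : ℂ) {α β γ δ : V2}, apAlg i = tbl α β γ δ → k ≠ 0 →
      circ (k • u) (k • u) = α 0 • k • u + α 1 • (t • u + v) →
      circ (k • u) (t • u + v) = β 0 • k • u + β 1 • (t • u + v) →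
      circ (t • u + v) (k • u) = γ 0 • k • u + γ 1 • (t • u + v) →
      circ (t • u + v) (t • u + v) = δ 0 • k • u + δ 1 • (t • u + v) →
      ∃ i : APIdx, Iso1 (fun x y => circ x y) (tm (apAlg i)) := by
    intro i k t α β γ δ hi hk h11 h12 h21 h22
    exact ⟨i, hi ▸ iso1_tbl_of_pair hdim circ (hli' hk) h11 h12 h21 h22⟩
  simp only [map_add, map_smul, LinearMap.add_apply, LinearMap.smul_apply, huu, huv, hvu, hvv]
    at change
  by_cases hc : c = 0
  · obtain rfl : d = 0 := by grind
    obtain rfl : a = 0 := by grind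
    subst hc
    by_cases hb : b = 0
    · subst hb
      by_cases hg : g = -1
      · subst hg
        by_cases hf : f = 0
        · refine change (.a06 (-1)) 1 0 rfl one_ne_zero ?_ ?_ ?_ ?_ <;>
            simp only [Matrix.cons_val_zero, Matrix.cons_val_one, Pi.zero_apply] <;>
            match_scalars <;> grind
        · refine change .a07 f 0 rfl hf ?_ ?_ ?_ ?_ <;>
            simp only [Matrix.cons_val_zero, Matrix.cons_val_one, Pi.zero_apply] <;>
            match_scalars <;> grind
      · have hg' : g + 1 ≠ 0 := by grind
        refine change (.a06 g) 1 (f / (g + 1)) rfl one_ne_zero ?_ ?_ ?_ ?_ <;>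
          simp only [Matrix.cons_val_zero, Matrix.cons_val_one, Pi.zero_apply] <;>
          match_scalars <;> grind
    · obtain rfl : g = b - 2 := by grind
      by_cases hb1 : b = -1
      · subst hb1
        by_cases hf : f = 0
        · refine change (.a08 (-2) (by norm_num)) 1 0 rfl one_ne_zero ?_ ?_ ?_ ?_ <;>
            simp only [Matrix.cons_val_zero, Matrix.cons_val_one, Pi.zero_apply] <;>
            match_scalars <;> grind
        · refine change .a09 f 0 rfl hf ?_ ?_ ?_ ?_ <;>
            simp only [Matrix.cons_val_zero, Matrix.cons_val_one, Pi.zero_apply] <;>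
            match_scalars <;> grind
      · have hb' : b + 1 ≠ 0 := by grind
        refine change (.a08 (b - 1) (by grind)) 1 (-f / (b + 1)) rfl one_ne_zero ?_ ?_ ?_ ?_ <;>
          simp only [Matrix.cons_val_zero, Matrix.cons_val_one, Pi.zero_apply] <;>
          match_scalars <;> grind
  · obtain ⟨k, hk⟩ := IsAlgClosed.exists_pow_nat_eq (-1 / c) two_pos
    have hk0 : k ≠ 0 := by rintro rfl; grind
    refine change .a05 k (a / c) rfl hk0 ?_ ?_ ?_ ?_ <;>
      simp only [Matrix.cons_val_zero, Matrix.cons_val_one, Pi.zero_apply] <;>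
      match_scalars <;> grind

theorem exists_iso1_of_not_commute (hdim : Module.finrank ℂ A = 2) (circ : A →ₗ[ℂ] A →ₗ[ℂ] A)
    (hap : ∀ x y z : A, circ x (circ y z) - circ y (circ x z) = circ (circ y x - circ x y) z)
    {x y : A} (hxy : circ x y ≠ circ y x) :
    ∃ i : APIdx, Iso1 (fun x y => circ x y) (tm (apAlg i)) := by
  have hli := linearIndependent_of_not_commute circ hxy
  obtain ⟨a, b, hw⟩ := exists_coords_of_pair hdim hli (circ x y - circ y x)
  have hw0 : a • x + b • y ≠ 0 := hw ▸ sub_ne_zero.2 hxy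
  by_cases ha : a = 0
  · have hb : b ≠ 0 := by rintro rfl; simp [ha] at hw0
    refine exists_iso1_of_bracket_eq hdim circ hap (v := (-b⁻¹) • x) hw0 ?_
    simp only [ha, zero_smul, zero_add, map_smul, LinearMap.smul_apply] at hw ⊢
    have hb' : b * b⁻¹ = 1 := mul_inv_cancel₀ hb
    linear_combination (norm := (match_scalars <;> grind)) hw
  · refine exists_iso1_of_bracket_eq hdim circ hap (v := a⁻¹ • y) hw0 ?_
    simp only [map_add, map_smul, LinearMap.add_apply, LinearMap.smul_apply]
    have ha' : a * a⁻¹ = 1 := mul_inv_cancel₀ ha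
    linear_combination (norm := (match_scalars <;> grind)) hw

theorem exists_iso1_of_idempotent (hdim : Module.finrank ℂ A = 2) (circ : A →ₗ[ℂ] A →ₗ[ℂ] A)
    (hcomm : ∀ x y : A, circ x y = circ y x)
    (hassoc : ∀ x y z : A, circ x (circ y z) = circ y (circ x z))
    {e : A} (he : e ≠ 0) (hee : circ e e = e) :
    ∃ i : APIdx, Iso1 (fun x y => circ x y) (tm (apAlg i)) := by
  obtain ⟨y, hli⟩ := exists_linearIndependent_pair hdim he
  obtain ⟨a, b, hey⟩ := exists_coords_of_pair hdim hli (circ e y)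
  obtain ⟨g, h, hyy⟩ := exists_coords_of_pair hdim hli (circ y y)
  have hye := (hcomm y e).trans hey
  have h1 := hassoc e y e
  have h2 := hassoc e y y
  simp only [map_add, map_smul, hee, hey, hye, hyy] at h1 h2
  obtain ⟨e1, e2⟩ := hli.eq_zero_of_pair (s := a * b) (t := b ^ 2 - b)
    (by linear_combination (norm := module) h1)
  obtain ⟨e3, e4⟩ := hli.eq_zero_of_pair (s := g + h * a - a ^ 2 - b * g) (t := -a * b)
    (by linear_combination (norm := module) h2)
  have change : ∀ (i : APIdx) (p q r s : ℂ) {α β γ δ : V2}, apAlg i = tbl α β γ δ →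
      p * s ≠ q * r →
      circ (p • e + q • y) (p • e + q • y) =
        α 0 • (p • e + q • y) + α 1 • (r • e + s • y) →
      circ (p • e + q • y) (r • e + s • y) =
        β 0 • (p • e + q • y) + β 1 • (r • e + s • y) →
      circ (r • e + s • y) (p • e + q • y) =
        γ 0 • (p • e + q • y) + γ 1 • (r • e + s • y) →
      circ (r • e + s • y) (r • e + s • y) =
        δ 0 • (p • e + q • y) + δ 1 • (r • e + s • y) →
      ∃ i : APIdx, Iso1 (fun x y => circ x y) (tm (apAlg i)) := by
    intro i p q r s α β γ δ hi hdet h11 h12 h21 h22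
    exact ⟨i, hi ▸ iso1_tbl_of_pair hdim circ
      ((LinearIndependent.pair_add_smul_add_smul_iff ..).2 ⟨hli, hdet⟩) h11 h12 h21 h22⟩
  simp only [map_add, map_smul, LinearMap.add_apply, LinearMap.smul_apply, hee, hey, hye, hyy]
    at change
  by_cases hb : b = 0
  · by_cases hh : h = 0
    · refine change .a03 1 0 (-a) 1 rfl (by simp) ?_ ?_ ?_ ?_ <;>
        simp only [Matrix.cons_val_zero, Matrix.cons_val_one, Pi.zero_apply] <;>
        match_scalars <;> grind
    · refine change .a01 1 0 (-a / h) (1 / h) rfl (by simpa) ?_ ?_ ?_ ?_ <;>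
        simp only [Matrix.cons_val_zero, Matrix.cons_val_one, Pi.zero_apply] <;>
        match_scalars <;> grind
  · obtain rfl : b = 1 := by grind
    obtain rfl : a = 0 := by grind
    obtain ⟨s, hs⟩ := IsAlgClosed.exists_pow_nat_eq (g + h ^ 2 / 4) two_pos
    by_cases hs0 : s = 0
    · refine change .a02 1 0 (-h / 2) 1 rfl (by simp) ?_ ?_ ?_ ?_ <;>
        simp only [Matrix.cons_val_zero, Matrix.cons_val_one, Pi.zero_apply] <;>
        match_scalars <;> grind
    · refine change .a01 (1 / 2 - h / (4 * s)) (1 / (2 * s)) (1 / 2 + h / (4 * s)) (-1 / (2 * s))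
        rfl (by grind) ?_ ?_ ?_ ?_ <;>
        simp only [Matrix.cons_val_zero, Matrix.cons_val_one, Pi.zero_apply] <;>
        match_scalars <;> grind

theorem exists_iso1_of_commute (hdim : Module.finrank ℂ A = 2) (circ : A →ₗ[ℂ] A →ₗ[ℂ] A)
    (hcomm : ∀ x y : A, circ x y = circ y x)
    (hassoc : ∀ x y z : A, circ x (circ y z) = circ y (circ x z))
    (hnz : ∃ x y : A, circ x y ≠ 0) :
    ∃ i : APIdx, Iso1 (fun x y => circ x y) (tm (apAlg i)) := by
  obtain ⟨x, hx⟩ : ∃ x, circ x x ≠ 0 := by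
    by_contra! h
    obtain ⟨x, y, hxy⟩ := hnz
    have h1 := h (x + y)
    simp only [map_add, LinearMap.add_apply, h, hcomm y x, zero_add, add_zero] at h1
    exact hxy (by simpa [← two_smul ℂ] using h1)
  have hx0 : x ≠ 0 := by rintro rfl; simp at hx
  by_cases hli : LinearIndependent ℂ ![x, circ x x]
  · obtain ⟨a, b, h3⟩ := exists_coords_of_pair hdim hli (circ x (circ x x))
    have h3' := (hcomm (circ x x) x).trans h3
    have h4 : circ (circ x x) (circ x x) = (a * b) • x + (a + b ^ 2) • circ x x := by
      rw [hassoc, h3', map_add, map_smul, map_smul, h3]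
      module
    by_cases ha : a = 0
    · subst ha
      by_cases hb : b = 0
      · subst hb
        exact ⟨.a04, iso1_tbl_of_pair hdim circ hli (by simp) (by simpa using h3)
          (by simpa using h3') (by simpa using h4)⟩
      · refine exists_iso1_of_idempotent hdim circ hcomm hassoc
          (e := (b ^ 2)⁻¹ • circ x x) (by simp [hb, hx]) ?_
        simp only [map_smul, LinearMap.smul_apply, h4]
        match_scalars <;> field_simp <;> simp
    · have h : circ (a⁻¹ • (circ x x - b • x)) x = x := by
        simp only [map_smul, map_sub, LinearMap.smul_apply, LinearMap.sub_apply, h3']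
        match_scalars <;> field_simp <;> ring
      refine exists_iso1_of_idempotent hdim circ hcomm hassoc
        (e := a⁻¹ • (circ x x - b • x)) (fun h0 => hx0 ?_) ?_
      · rw [← h, h0]; simp
      · simp only [map_smul, map_sub, LinearMap.smul_apply, LinearMap.sub_apply, h3, h3', h4]
        match_scalars <;> field_simp <;> ring
  · obtain ⟨c, hc⟩ : ∃ c : ℂ, c • x = circ x x := by
      simpa [LinearIndependent.pair_iff' hx0] using hli
    have hc0 : c ≠ 0 := by rintro rfl; simp at hc; exact hx hc.symm
    refine exists_iso1_of_idempotent hdim circ hcomm hassoc (e := c⁻¹ • x) (by simp [hc0, hx0]) ?_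
    simp only [map_smul, LinearMap.smul_apply, ← hc]
    match_scalars; field_simp

end Existence

/-- Every nonzero 2-dimensional anti-pre-Lie algebra over ℂ is
isomorphic to exactly one of A01–A09 (with A08^λ only for λ ≠ -1). -/
theorem statement16 (A : Type*) [AddCommGroup A] [Module ℂ A]
    (hdim : Module.finrank ℂ A = 2)
    (circ : A →ₗ[ℂ] A →ₗ[ℂ] A)
    (hap₁ : ∀ x y z : A, circ x (circ y z) - circ y (circ x z) =
      circ (circ y x - circ x y) z)
    (hap₂ : ∀ x y z : A, circ (circ x y - circ y x) z + circ (circ y z - circ z y) x +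
      circ (circ z x - circ x z) y = 0)
    (hnz : ∃ x y : A, circ x y ≠ 0) :
    (∃ i : APIdx, Iso1 (fun x y => circ x y) (tm (apAlg i))) ∧
    (∀ i j : APIdx, Iso1 (tm (apAlg i)) (tm (apAlg j)) → i = j) := by
  refine ⟨?_, apAlg_eq_of_iso1⟩
  by_cases hcomm : ∀ x y, circ x y = circ y x
  · refine exists_iso1_of_commute hdim circ hcomm (fun x y z => ?_) hnz
    have h := hap₁ x y z
    rwa [hcomm y x, sub_self, map_zero, LinearMap.zero_apply, sub_eq_zero] at h
  · push Not at hcomm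
    obtain ⟨x, y, hxy⟩ := hcomm
    exact exists_iso1_of_not_commute hdim circ hap₁ hxy
end
end

section
/- Every nonzero 2-dimensional pre-Poisson algebra (P, ·, ∘) over ℂ is isomorphic to one of the following algebras, given on a basis e1, e2 (all unlisted products of basis elements are zero): with · ≡ 0: the pre-Lie algebras P01: e1∘e1 = e1 + e2, e2∘e1 = e2; P02: e1∘e1 = e1 + e2, e1∘e2 = e2; P03: e1∘e1 = e2; P04: e2∘e1 = e1; P05^α: e1∘e1 = e1, e1∘e2 = α·e2; P06^α: e1∘e1 = e1, e1∘e2 = α·e2, e2∘e1 = e2; P07: e1∘e1 = e1, e2∘e2 = e2; P08: e1∘e1 = e1, e1∘e2 = 2·e2, e2∘e1 = (1/2)·e1 + e2, e2∘e2 = e2; or: P09^α (α ∈ ℂ): e1·e1 = e2, e1∘e1 = α·e2; P10: e1·e1 = e2, e1∘e1 = e1, e1∘e2 = e2, e2∘e1 = e2. Moreover, P09^α ≅ P09^β if and only if α = β. -/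
noncomputable section

/-- Index of the nonzero 2-dimensional pre-Lie algebras C01–C08. -/
inductive PLIdx : Type
  | c01 | c02 | c03 | c04
  | c05 (α : ℂ)
  | c06 (α : ℂ)
  | c07 | c08

/-- The multiplication tables of the nonzero 2-dimensional pre-Lie algebras C01–C08. -/
def plAlg : PLIdx → Fin 2 → Fin 2 → V2
  | .c01 => tbl ![1,1] 0 ![0,1] 0            -- e1∘e1 = e1+e2, e2∘e1 = e2
  | .c02 => tbl ![1,1] ![0,1] 0 0            -- e1∘e1 = e1+e2, e1∘e2 = e2
  | .c03 => tbl ![0,1] 0 0 0                 -- e1∘e1 = e2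
  | .c04 => tbl 0 0 ![1,0] 0                 -- e2∘e1 = e1
  | .c05 α => tbl ![1,0] ![0,α] 0 0          -- e1∘e1 = e1, e1∘e2 = α e2
  | .c06 α => tbl ![1,0] ![0,α] ![0,1] 0     -- e1∘e1 = e1, e1∘e2 = α e2, e2∘e1 = e2
  | .c07 => tbl ![1,0] 0 0 ![0,1]            -- e1∘e1 = e1, e2∘e2 = e2
  | .c08 => tbl ![1,0] ![0,2] ![1/2,1] ![0,1]

section TwoDimensional

variable {P : Type*} [AddCommGroup P] [Module ℂ P]

/-- The linearly independent pair `u, v` multiplies under `μ` according to the table `c`. -/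
def MulTable (μ : P →ₗ[ℂ] P →ₗ[ℂ] P) (u v : P) (c : Fin 2 → Fin 2 → V2) : Prop :=
  μ u u = c 0 0 0 • u + c 0 0 1 • v ∧ μ u v = c 0 1 0 • u + c 0 1 1 • v ∧
    μ v u = c 1 0 0 • u + c 1 0 1 • v ∧ μ v v = c 1 1 0 • u + c 1 1 1 • v

theorem mulTable_tbl (μ : P →ₗ[ℂ] P →ₗ[ℂ] P) (u v : P) (a b c d a' b' c' d' : ℂ) :
    MulTable μ u v (tbl ![a, a'] ![b, b'] ![c, c'] ![d, d']) ↔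
      μ u u = a • u + a' • v ∧ μ u v = b • u + b' • v ∧
        μ v u = c • u + c' • v ∧ μ v v = d • u + d' • v := by
  simp [MulTable, tbl]

theorem tm_zero : tm 0 = zm := by
  ext x y i
  simp [tm, zm]

theorem iso2_of_mulTable (hdim : Module.finrank ℂ P = 2) {u v : P}
    (h : LinearIndependent ℂ ![u, v]) {μ ν : P →ₗ[ℂ] P →ₗ[ℂ] P}
    {c d : Fin 2 → Fin 2 → V2} (hμ : MulTable μ u v c) (hν : MulTable ν u v d) :
    Iso2 (fun x y => μ x y) (fun x y => ν x y) (tm c) (tm d) := by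
  have key : ∀ (b : Module.Basis (Fin 2) ℂ P), b 0 = u → b 1 = v →
      ∀ (μ : P →ₗ[ℂ] P →ₗ[ℂ] P) (c : Fin 2 → Fin 2 → V2), MulTable μ u v c →
      ∀ x y, b.equivFun (μ x y) = tm c (b.equivFun x) (b.equivFun y) := by
    rintro b rfl rfl μ c ⟨h₁, h₂, h₃, h₄⟩ x y
    obtain ⟨x, rfl⟩ := b.equivFun.symm.surjective x
    obtain ⟨y, rfl⟩ := b.equivFun.symm.surjective y
    apply b.equivFun.symm.injective
    rw [LinearEquiv.apply_symm_apply, LinearEquiv.apply_symm_apply]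
    simp only [LinearEquiv.symm_apply_apply,
      Module.Basis.equivFun_symm_apply, Fin.sum_univ_two, map_add, map_smul,
      LinearMap.add_apply, LinearMap.smul_apply, h₁, h₂, h₃, h₄, tm]
    module
  let b := basisOfLinearIndependentOfCardEqFinrank h (by simp [hdim])
  have h0 : b 0 = u := by simp [b]
  have h1 : b 1 = v := by simp [b]
  exact ⟨b.equivFun, key b h0 h1 μ c hμ, key b h0 h1 ν d hν⟩

theorem exists_coords (hdim : Module.finrank ℂ P = 2) {u v : P}
    (h : LinearIndependent ℂ ![u, v]) (x : P) : ∃ a b : ℂ, x = a • u + b • v := by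
  let b := basisOfLinearIndependentOfCardEqFinrank h (by simp [hdim])
  refine ⟨b.equivFun x 0, b.equivFun x 1, ?_⟩
  have := b.sum_equivFun x
  rw [Fin.sum_univ_two] at this
  simpa [b] using this.symm

theorem coords_eq {u v : P} (h : LinearIndependent ℂ ![u, v]) {a b c d : ℂ}
    (he : a • u + b • v = c • u + d • v) : a = c ∧ b = d := by
  have := LinearIndependent.pair_iff.1 h (a - c) (b - d) (by
    rw [← sub_eq_zero] at he
    rw [← he]
    module)
  exact ⟨sub_eq_zero.1 this.1, sub_eq_zero.1 this.2⟩

theorem linearIndependent_pair_of_smul {u v : P} (hu : u ≠ 0)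
    (h : ∀ c : ℂ, v ≠ c • u) : LinearIndependent ℂ ![u, v] :=
  (LinearIndependent.pair_iff' hu).2 fun c hc => h c hc.symm

theorem linearIndependent_comb {u v : P} (h : LinearIndependent ℂ ![u, v]) {p q r s : ℂ}
    (hdet : p * s - q * r ≠ 0) :
    LinearIndependent ℂ ![p • u + q • v, r • u + s • v] := by
  refine LinearIndependent.pair_iff.2 fun a b hab => ?_
  have := LinearIndependent.pair_iff.1 h (a * p + b * r) (a * q + b * s) (by
    rw [← hab]
    module)
  constructor
  · refine (mul_eq_zero.1 ?_).resolve_right hdet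
    linear_combination s * this.1 - r * this.2
  · refine (mul_eq_zero.1 ?_).resolve_right hdet
    linear_combination p * this.2 - q * this.1

theorem linearIndependent_of_commutator_ne_zero (μ : P →ₗ[ℂ] P →ₗ[ℂ] P) {x y : P}
    (h : μ x y - μ y x ≠ 0) : LinearIndependent ℂ ![x, y] := by
  refine linearIndependent_pair_of_smul ?_ ?_
  · rintro rfl
    simp at h
  · rintro c rfl
    simp at h

theorem exists_commutator_eq_self (hdim : Module.finrank ℂ P = 2)
    (μ : P →ₗ[ℂ] P →ₗ[ℂ] P) {x y : P} (h : μ x y - μ y x ≠ 0) :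
    ∃ e f : P, LinearIndependent ℂ ![e, f] ∧ μ f e = μ e f + e := by
  obtain ⟨a, b, hab⟩ := exists_coords hdim (linearIndependent_of_commutator_ne_zero μ h)
    (μ x y - μ y x)
  set e := μ x y - μ y x with he
  suffices ∃ f, μ f e - μ e f = e by
    obtain ⟨f, hf⟩ := this
    refine ⟨e, f, linearIndependent_of_commutator_ne_zero μ ?_, ?_⟩
    · rw [← neg_sub, hf]
      exact neg_ne_zero.2 h
    · rw [add_comm]
      exact sub_eq_iff_eq_add.1 hf
  by_cases ha : a = 0
  · have hb : b ≠ 0 := by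
      rintro rfl
      simp [ha] at hab
      exact h hab
    refine ⟨b⁻¹ • x, ?_⟩
    have : μ x e - μ e x = b • e := by
      conv_lhs => rw [hab]
      rw [he]
      simp only [map_add, map_smul, LinearMap.add_apply, LinearMap.smul_apply]
      rw [ha]; module
    simp only [map_smul, LinearMap.smul_apply, ← smul_sub, this, smul_smul,
      inv_mul_cancel₀ hb, one_smul]
  · refine ⟨(-a⁻¹) • y, ?_⟩
    have : μ y e - μ e y = (-a) • e := by
      conv_lhs => rw [hab]
      rw [he]
      simp only [map_add, map_smul, LinearMap.add_apply, LinearMap.smul_apply]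
      module
    simp only [map_smul, LinearMap.smul_apply, ← smul_sub, this, smul_smul,
      neg_mul_neg, inv_mul_cancel₀ ha, one_smul]

/-- Some linearly independent pair multiplies under `μ` according to the table `c`. -/
def HasMulTable (μ : P →ₗ[ℂ] P →ₗ[ℂ] P) (c : Fin 2 → Fin 2 → V2) : Prop :=
  ∃ u v, LinearIndependent ℂ ![u, v] ∧ MulTable μ u v c

theorem hasMulTable_of_comb {μ : P →ₗ[ℂ] P →ₗ[ℂ] P} {u v : P}
    (h : LinearIndependent ℂ ![u, v]) {c : Fin 2 → Fin 2 → V2} (p q r s : ℂ)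
    (hdet : p * s - q * r ≠ 0) (hc : MulTable μ (p • u + q • v) (r • u + s • v) c) :
    HasMulTable μ c :=
  ⟨_, _, linearIndependent_comb h hdet, hc⟩


theorem exists_zinbiel_basis (hdim : Module.finrank ℂ P = 2) (zin : P →ₗ[ℂ] P →ₗ[ℂ] P)
    (hzin : ∀ x y z : P, zin x (zin y z) = zin (zin y x + zin x y) z)
    (hnz : ∃ x y : P, zin x y ≠ 0) :
    ∃ u v, LinearIndependent ℂ ![u, v] ∧ zin u u = v ∧ zin u v = 0 ∧ zin v u = 0 ∧
      zin v v = 0 := by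
  obtain ⟨x, hx⟩ : ∃ x, zin x x ≠ 0 := by
    by_contra! hsq
    have hanti : ∀ x y, zin y x = -zin x y := by
      intro x y
      have := hsq (x + y)
      simp only [map_add, LinearMap.add_apply, hsq, zero_add, add_zero] at this
      exact eq_neg_of_add_eq_zero_left this
    have hnil : ∀ x y z, zin x (zin y z) = 0 := by
      intro x y z
      rw [hzin, hanti x y]
      simp
    obtain ⟨x, y, hxy⟩ := hnz
    have hind : LinearIndependent ℂ ![x, y] := by
      refine linearIndependent_pair_of_smul ?_ ?_
      · rintro rfl
        simp at hxy
      · rintro c rfl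
        simp [hsq] at hxy
    obtain ⟨a, b, hab⟩ := exists_coords hdim hind (zin x y)
    have h₁ := hnil x x y
    have h₂ := hnil y x y
    rw [hab] at h₁ h₂
    simp only [map_add, map_smul, hsq, hanti x y, smul_zero, zero_add, add_zero, smul_neg,
      neg_eq_zero, smul_eq_zero, hxy, or_false] at h₁ h₂
    simp [h₁, h₂] at hab
    exact hxy hab
  have hind : LinearIndependent ℂ ![x, zin x x] := by
    refine linearIndependent_pair_of_smul ?_ ?_
    · rintro rfl
      simp at hx
    · intro c hc
      have h := hzin x x x
      simp only [hc, map_add, map_smul, LinearMap.add_apply, LinearMap.smul_apply] at h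
      have h' : (c * c) • x = 0 := by
        rw [← sub_eq_zero] at h
        rw [← neg_eq_zero, ← h]
        module
      rcases smul_eq_zero.1 h' with h' | h'
      · simp [mul_self_eq_zero.1 h'] at hc
        exact hx hc
      · simp [h'] at hx
  obtain ⟨v, hv⟩ : ∃ v, v = zin x x := ⟨_, rfl⟩
  rw [← hv] at hind
  obtain ⟨a, b, hab⟩ := exists_coords hdim hind (zin v x)
  have hxv : zin x v = (2 * a) • x + (2 * b) • v := by
    have h := hzin x x x
    rw [← hv, map_add, LinearMap.add_apply, hab] at h
    rw [h]
    module
  have h₁ := hzin v x x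
  have h₂ := hzin x v x
  have h₃ := hzin x x v
  simp only [← hv, hab, hxv, map_add, map_smul, LinearMap.add_apply,
    LinearMap.smul_apply] at h₁ h₂ h₃
  obtain ⟨p, q, hvv⟩ := exists_coords hdim hind (zin v v)
  rw [hvv] at h₁ h₃
  have e₁ : _ ∧ _ := coords_eq hind (a := p) (b := q) (c := 3 * a * b)
    (d := 3 * a + 3 * b ^ 2) (by rw [h₁]; module)
  have e₂ : _ ∧ _ := coords_eq hind (a := 2 * a * b) (b := a + 2 * b ^ 2) (c := 3 * a * b)
    (d := 3 * a + 3 * b ^ 2) (by convert h₂ using 1 <;> module)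
  have e₃ : _ ∧ _ := coords_eq hind (a := 4 * a * b) (b := 2 * a + 4 * b ^ 2) (c := 2 * p)
    (d := 2 * q) (by convert h₃ using 1 <;> module)
  have hb : b = 0 := by
    have : b ^ 3 = 0 := by
      linear_combination -b * e₂.2 + 2 * e₂.1
    exact pow_eq_zero_iff three_ne_zero |>.1 this
  subst hb
  have ha : a = 0 := by linear_combination -(1 / 2) * e₂.2
  subst ha
  have hp : p = 0 := by linear_combination e₁.1
  have hq : q = 0 := by linear_combination e₁.2
  exact ⟨x, v, hind, hv.symm, by simp [hxv], by simp [hab], by simp [hvv, hp, hq]⟩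

theorem iso2_of_zinbiel_ne_zero (hdim : Module.finrank ℂ P = 2)
    (zin circ : P →ₗ[ℂ] P →ₗ[ℂ] P)
    (hzin : ∀ x y z : P, zin x (zin y z) = zin (zin y x + zin x y) z)
    (hcompat₁ : ∀ x y z : P, zin (circ x y - circ y x) z =
      circ x (zin y z) - zin y (circ x z))
    (hcompat₂ : ∀ x y z : P, circ (zin x y + zin y x) z =
      zin x (circ y z) + zin y (circ x z))
    (hnz : ∃ x y : P, zin x y ≠ 0) :
    (∃ α : ℂ, Iso2 (fun x y => zin x y) (fun x y => circ x y)
        (tm (tbl ![0,1] 0 0 0)) (tm (tbl ![0,α] 0 0 0))) ∨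
     Iso2 (fun x y => zin x y) (fun x y => circ x y)
        (tm (tbl ![0,1] 0 0 0)) (tm (tbl ![1,0] ![0,1] ![0,1] 0)) := by
  obtain ⟨u, v, hind, huu, huv, hvu, hvv⟩ := exists_zinbiel_basis hdim zin hzin hnz
  obtain ⟨a, b, hab⟩ := exists_coords hdim hind (circ u u)
  have hcuv : circ u v = a • v := by
    have h := hcompat₁ u u u
    simp only [hab, huu, huv, map_add, map_smul, sub_self, map_zero, LinearMap.zero_apply,
      smul_zero, add_zero] at h
    exact (sub_eq_zero.1 h.symm)
  have hcv : ∀ z, circ v z = zin u (circ u z) := by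
    intro z
    have h := hcompat₂ u u z
    rw [huu, map_add, LinearMap.add_apply, ← two_smul ℂ, ← two_smul ℂ] at h
    exact smul_right_injective P (two_ne_zero (α := ℂ)) h
  have hcvu : circ v u = a • v := by simp [hcv, hab, huu, huv]
  have hcvv : circ v v = 0 := by simp [hcv, hcuv, huv]
  by_cases ha : a = 0
  · left
    subst ha
    exact ⟨b, iso2_of_mulTable hdim hind
      (by simp [MulTable, tbl, huu, huv, hvu, hvv])
      (by simp [MulTable, tbl, hab, hcuv, hcvu, hcvv])⟩
  · right
    refine iso2_of_mulTable hdim (linearIndependent_comb hind (p := a⁻¹)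
      (q := -b / a ^ 2) (r := 0) (s := (a ^ 2)⁻¹) ?_) ?_ ?_
    · field_simp
      simpa using ha
    · simp only [MulTable, tbl, map_add, map_smul, LinearMap.add_apply, LinearMap.smul_apply,
        huu, huv, hvu, hvv]
      refine ⟨?_, ?_, ?_, ?_⟩ <;> simp <;> match_scalars <;> field_simp
    · simp only [MulTable, tbl, map_add, map_smul, LinearMap.add_apply, LinearMap.smul_apply,
        hab, hcuv, hcvu, hcvv]
      refine ⟨?_, ?_, ?_, ?_⟩ <;> simp <;> match_scalars <;> field_simp <;> ring

end TwoDimensional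

section PreLie

variable {P : Type*} [AddCommGroup P] [Module ℂ P]

theorem exists_hasMulTable_of_noncomm (hdim : Module.finrank ℂ P = 2)
    (circ : P →ₗ[ℂ] P →ₗ[ℂ] P)
    (hpre : ∀ x y z : P, circ (circ x y) z - circ (circ y x) z =
      circ x (circ y z) - circ y (circ x z))
    (hnc : ∃ x y, circ x y - circ y x ≠ 0) : ∃ i : PLIdx, HasMulTable circ (plAlg i) := by
  obtain ⟨x, y, hxy⟩ := hnc
  obtain ⟨e, f, hind, hfe⟩ := exists_commutator_eq_self hdim circ hxy
  obtain ⟨p, q, hee⟩ := exists_coords hdim hind (circ e e)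
  obtain ⟨r, s, hef⟩ := exists_coords hdim hind (circ e f)
  obtain ⟨t, u, hff⟩ := exists_coords hdim hind (circ f f)
  rw [hef] at hfe
  have h₁ := hpre f e e
  have h₂ := hpre f e f
  simp only [hee, hef, hfe, hff, map_add, map_smul, LinearMap.add_apply,
    LinearMap.smul_apply] at h₁ h₂
  have e₁ : _ ∧ _ := coords_eq hind (a := p) (b := q) (c := t * q - r * s)
    (d := s * p + u * q - q * (r + 1) - s ^ 2) (by
      rw [← sub_eq_zero] at h₁ ⊢
      rw [← h₁]
      module)
  have e₂ : _ ∧ _ := coords_eq hind (a := r) (b := s)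
    (c := (r + 1) * r + t * s - p * t - r * u) (d := s * r - q * t) (by
      rw [← sub_eq_zero] at h₂ ⊢
      rw [← h₂]
      module)
  obtain ⟨e₁, e₁'⟩ := e₁
  obtain ⟨e₂, e₂'⟩ := e₂
  have hs : s = -p := by linear_combination e₁ + e₂'
  subst hs
  by_cases hq : q = 0
  · subst hq
    have hp : p = 0 := by
      have : p ^ 2 = 0 := by linear_combination (1 / 2) * e₁'
      exact pow_eq_zero_iff two_ne_zero |>.1 this
    subst hp
    have hru : r * (r - u) = 0 := by linear_combination -e₂
    rcases mul_eq_zero.1 hru with hr | hr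
    · subst hr
      by_cases hu : u = 0
      · subst hu
        refine ⟨.c04, hasMulTable_of_comb hind 1 0 (-t) 1 (by simp) ?_⟩
        simp only [MulTable, plAlg, tbl, map_add, map_smul, LinearMap.add_apply,
          LinearMap.smul_apply, hee, hef, hfe, hff]
        refine ⟨?_, ?_, ?_, ?_⟩ <;> simp
      · by_cases hu1 : u = 1
        · subst hu1
          by_cases ht : t = 0
          · subst ht
            refine ⟨.c05 1, hasMulTable_of_comb hind 0 1 1 0 (by simp) ?_⟩
            simp only [MulTable, plAlg, tbl, map_add, map_smul, LinearMap.add_apply,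
              LinearMap.smul_apply, hee, hef, hfe, hff]
            refine ⟨?_, ?_, ?_, ?_⟩ <;> simp
          · refine ⟨.c02, hasMulTable_of_comb hind 0 1 t 0 (by simpa using ht) ?_⟩
            simp only [MulTable, plAlg, tbl, map_add, map_smul, LinearMap.add_apply,
              LinearMap.smul_apply, hee, hef, hfe, hff]
            refine ⟨?_, ?_, ?_, ?_⟩ <;> simp
            module
        · have hu1' : u - 1 ≠ 0 := sub_ne_zero.2 hu1
          refine ⟨.c05 u⁻¹, hasMulTable_of_comb hind (t / ((u - 1) * u)) u⁻¹ 1 0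
            (by simpa using hu) ?_⟩
          simp only [MulTable, plAlg, tbl, map_add, map_smul, LinearMap.add_apply,
            LinearMap.smul_apply, hee, hef, hfe, hff]
          refine ⟨?_, ?_, ?_, ?_⟩ <;> simp <;> match_scalars <;> field_simp <;> ring
    · obtain rfl : r = u := sub_eq_zero.1 hr
      by_cases hu : r = 0
      · subst hu
        refine ⟨.c04, hasMulTable_of_comb hind 1 0 (-t) 1 (by simp) ?_⟩
        simp only [MulTable, plAlg, tbl, map_add, map_smul, LinearMap.add_apply,
          LinearMap.smul_apply, hee, hef, hfe, hff]
        refine ⟨?_, ?_, ?_, ?_⟩ <;> simp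
      · by_cases hu1 : r + 1 = 0
        · obtain rfl : r = -1 := eq_neg_of_add_eq_zero_left hu1
          by_cases ht : t = 0
          · subst ht
            refine ⟨.c06 0, hasMulTable_of_comb hind 0 (-1) 1 0 (by simp) ?_⟩
            simp only [MulTable, plAlg, tbl, map_add, map_smul, LinearMap.add_apply,
              LinearMap.smul_apply, hee, hef, hfe, hff]
            refine ⟨?_, ?_, ?_, ?_⟩ <;> simp
          · refine ⟨.c01, hasMulTable_of_comb hind 0 (-1) t 0 (by simpa using ht) ?_⟩
            simp only [MulTable, plAlg, tbl, map_add, map_smul, LinearMap.add_apply,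
              LinearMap.smul_apply, hee, hef, hfe, hff]
            refine ⟨?_, ?_, ?_, ?_⟩ <;> simp
            module
        · refine ⟨.c06 ((r + 1) / r), hasMulTable_of_comb hind (-t / ((r + 1) * r)) r⁻¹ 1 0
            (by simpa using hu) ?_⟩
          simp only [MulTable, plAlg, tbl, map_add, map_smul, LinearMap.add_apply,
            LinearMap.smul_apply, hee, hef, hfe, hff]
          refine ⟨?_, ?_, ?_, ?_⟩ <;> simp <;> match_scalars <;> field_simp <;> ring
  · obtain ⟨n, hn⟩ := IsAlgClosed.exists_pow_nat_eq (-q) (n := 2) (by norm_num)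
    obtain rfl : q = -n ^ 2 := by linear_combination hn
    have hn0 : n ≠ 0 := by
      rintro rfl
      simp at hq
    obtain ⟨k, rfl⟩ : ∃ k, p = -(k * n ^ 2) := ⟨-p / n ^ 2, by field_simp⟩
    have hn2 : n ^ 2 ≠ 0 := pow_ne_zero 2 hn0
    have hu : u = r + 2 - 2 * k ^ 2 * n ^ 2 := by
      refine mul_left_cancel₀ hn2 ?_
      linear_combination e₁'
    subst hu
    have ht : t = k * (1 - r) := by
      refine mul_left_cancel₀ hn2 ?_
      linear_combination e₁
    subst ht
    obtain rfl : r = k ^ 2 * n ^ 2 := by linear_combination (1 / 2) * e₂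
    refine ⟨.c08, hasMulTable_of_comb hind (n⁻¹ + k) 1 (k / 2) (1 / 2) ?_ ?_⟩
    · have : (n⁻¹ + k) * (1 / 2) - 1 * (k / 2) = n⁻¹ / 2 := by ring
      rw [this]
      simpa using hn0
    · simp only [MulTable, plAlg, tbl, map_add, map_smul, LinearMap.add_apply,
        LinearMap.smul_apply, hee, hef, hfe, hff]
      refine ⟨?_, ?_, ?_, ?_⟩ <;> simp <;> match_scalars <;> field_simp <;> ring

theorem exists_hasMulTable_of_comm (hdim : Module.finrank ℂ P = 2)
    (circ : P →ₗ[ℂ] P →ₗ[ℂ] P)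
    (hpre : ∀ x y z : P, circ (circ x y) z - circ (circ y x) z =
      circ x (circ y z) - circ y (circ x z))
    (hcomm : ∀ x y, circ x y = circ y x) (hnz : ∃ x y, circ x y ≠ 0) :
    ∃ i : PLIdx, HasMulTable circ (plAlg i) := by
  have hleft : ∀ x y z, circ x (circ y z) = circ y (circ x z) := by
    intro x y z
    rw [← sub_eq_zero, ← hpre, hcomm x y, sub_self]
  by_cases hcyc : ∃ x, LinearIndependent ℂ ![x, circ x x]
  · obtain ⟨x, hind⟩ := hcyc
    obtain ⟨y, hy⟩ : ∃ y, y = circ x x := ⟨_, rfl⟩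
    rw [← hy] at hind
    obtain ⟨a, b, hxy⟩ := exists_coords hdim hind (circ x y)
    have hyx : circ y x = a • x + b • y := by rw [hcomm, hxy]
    have hyy : circ y y = (a * b) • x + (a + b ^ 2) • y := by
      conv_lhs => rw [hy, hleft, ← hy, hyx, map_add, map_smul, map_smul, ← hy, hxy]
      module
    by_cases ha : a = 0
    · subst ha
      by_cases hb : b = 0
      · subst hb
        refine ⟨.c03, x, y, hind, ?_⟩
        simp [MulTable, plAlg, tbl, ← hy, hxy, hyx, hyy]
      · refine ⟨.c05 0, hasMulTable_of_comb hind 0 (b ^ 2)⁻¹ 1 (-b⁻¹) (by simpa using hb) ?_⟩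
        simp only [MulTable, plAlg, tbl, map_add, map_smul, LinearMap.add_apply,
          LinearMap.smul_apply, ← hy, hxy, hyx, hyy]
        refine ⟨?_, ?_, ?_, ?_⟩ <;> simp <;> match_scalars <;> field_simp <;> ring
    · obtain ⟨d, hd⟩ := IsAlgClosed.exists_pow_nat_eq (b ^ 2 + 4 * a) (n := 2) (by norm_num)
      obtain ⟨m, n, rfl, rfl⟩ : ∃ m n : ℂ, a = -(m * n) ∧ b = m + n :=
        ⟨(b + d) / 2, (b - d) / 2, by linear_combination (-1 / 4) * hd, by ring⟩
      have hm : m ≠ 0 := by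
        rintro rfl
        simp at ha
      have hn : n ≠ 0 := by
        rintro rfl
        simp at ha
      by_cases hmn : m = n
      · subst hmn
        refine ⟨.c06 1, hasMulTable_of_comb hind (m⁻¹ + (m ^ 2)⁻¹ * m) (-(m ^ 2)⁻¹) (-m) 1
          ?_ ?_⟩
        · field_simp
          simpa using hm
        · simp only [MulTable, plAlg, tbl, map_add, map_smul, LinearMap.add_apply,
            LinearMap.smul_apply, ← hy, hxy, hyx, hyy]
          refine ⟨?_, ?_, ?_, ?_⟩ <;> simp <;> match_scalars <;> field_simp <;> ring
      · have hmn' : m - n ≠ 0 := sub_ne_zero.2 hmn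
        have hnm : n - m ≠ 0 := sub_ne_zero.2 (Ne.symm hmn)
        refine ⟨.c07, hasMulTable_of_comb hind (-n / (m * (m - n))) (m * (m - n))⁻¹
          (-m / (n * (n - m))) (n * (n - m))⁻¹ ?_ ?_⟩
        · have : -n / (m * (m - n)) * (n * (n - m))⁻¹ - (m * (m - n))⁻¹ * (-m / (n * (n - m)))
              = -(m * n * (m - n))⁻¹ := by
            field_simp
            ring
          rw [this]
          simp [hm, hn, hmn']
        · simp only [MulTable, plAlg, tbl, map_add, map_smul, LinearMap.add_apply,
            LinearMap.smul_apply, ← hy, hxy, hyx, hyy]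
          refine ⟨?_, ?_, ?_, ?_⟩ <;> simp <;> match_scalars <;> field_simp <;> ring
  · exfalso
    push Not at hcyc
    have hsq : ∀ x, ∃ c : ℂ, circ x x = c • x := by
      intro x
      by_contra! h
      refine hcyc x (linearIndependent_pair_of_smul ?_ h)
      rintro rfl
      exact h 0 (by simp)
    obtain ⟨x, hx⟩ : ∃ x, circ x x ≠ 0 := by
      by_contra! h
      obtain ⟨x, y, hxy⟩ := hnz
      have := h (x + y)
      simp only [map_add, LinearMap.add_apply, h, zero_add, add_zero, hcomm y x,
        ← two_smul ℂ] at this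
      exact hxy ((smul_eq_zero.1 this).resolve_left two_ne_zero)
    obtain ⟨c, hc⟩ := hsq x
    have hc0 : c ≠ 0 := by
      rintro rfl
      simp at hc
      exact hx hc
    have hx0 : x ≠ 0 := by
      rintro rfl
      simp at hx
    obtain ⟨e, he0, hee⟩ : ∃ e, e ≠ 0 ∧ circ e e = e := by
      refine ⟨c⁻¹ • x, smul_ne_zero (inv_ne_zero hc0) hx0, ?_⟩
      simp [hc, smul_smul, hc0]
    obtain ⟨y, hind⟩ : ∃ y, LinearIndependent ℂ ![e, y] :=
      exists_linearIndependent_pair_of_one_lt_finrank (by omega) he0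
    obtain ⟨d, hd⟩ := hsq y
    obtain ⟨a, b, hey⟩ := exists_coords hdim hind (circ e y)
    have hye : circ y e = a • e + b • y := by rw [hcomm, hey]
    obtain ⟨k, hk⟩ := hsq (e + y)
    obtain ⟨l, hl⟩ := hsq (e - y)
    simp only [map_add, map_sub, LinearMap.add_apply, LinearMap.sub_apply, hee, hd, hey,
      hye] at hk hl
    obtain ⟨k₁, k₂⟩ := coords_eq hind (a := 1 + 2 * a) (b := d + 2 * b) (c := k) (d := k) (by
      rw [smul_add] at hk
      rw [← hk]
      module)
    obtain ⟨l₁, l₂⟩ := coords_eq hind (a := 1 - 2 * a) (b := d - 2 * b) (c := l) (d := -l) (by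
      rw [neg_smul, ← sub_eq_add_neg, ← smul_sub, ← hl]
      module)
    have hidem : circ e (circ e y) = circ e y := by
      rw [hcomm e y, hleft, hee]
    simp only [hey, map_add, map_smul, hee] at hidem
    obtain ⟨-, i₂⟩ := coords_eq hind (a := a + b * a) (b := b * b) (c := a) (d := b) (by
      rw [← hidem]
      module)
    have hb : b = 1 / 2 := by linear_combination (-1 / 4) * (k₁ - k₂ + l₁ + l₂)
    rw [hb] at i₂
    norm_num at i₂

theorem exists_hasMulTable_plAlg (hdim : Module.finrank ℂ P = 2)
    (circ : P →ₗ[ℂ] P →ₗ[ℂ] P)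
    (hpre : ∀ x y z : P, circ (circ x y) z - circ (circ y x) z =
      circ x (circ y z) - circ y (circ x z))
    (hnz : ∃ x y, circ x y ≠ 0) : ∃ i : PLIdx, HasMulTable circ (plAlg i) := by
  by_cases hcomm : ∀ x y, circ x y = circ y x
  · exact exists_hasMulTable_of_comm hdim circ hpre hcomm hnz
  · push Not at hcomm
    exact exists_hasMulTable_of_noncomm hdim circ hpre
      (hcomm.imp fun x hx => hx.imp fun y hy => sub_ne_zero.2 hy)

end PreLie

theorem iso2_nilpotent_iff (α β : ℂ) :
    Iso2 (tm (tbl ![0,1] 0 0 0)) (tm (tbl ![0,α] 0 0 0))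
      (tm (tbl ![0,1] 0 0 0)) (tm (tbl ![0,β] 0 0 0)) ↔ α = β := by
  constructor
  · rintro ⟨φ, h₁, h₂⟩
    have hα : ∀ γ : ℂ, ∀ x y, tm (tbl ![0,γ] 0 0 0) x y = γ • tm (tbl ![0,1] 0 0 0) x y := by
      intro γ x y
      ext i
      fin_cases i <;> simp [tm, tbl]
      ring
    have h := h₂ ![1, 0] ![1, 0]
    rw [hα α, hα β, map_smul, ← h₁] at h
    refine smul_left_injective ℂ ?_ h
    rw [Ne, LinearEquiv.map_eq_zero_iff]
    intro h0
    simpa [tm, tbl] using congrFun h0 1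
  · rintro rfl
    exact ⟨LinearEquiv.refl ℂ _, fun _ _ => rfl, fun _ _ => rfl⟩

/-- Every nonzero 2-dimensional pre-Poisson algebra over ℂ is
isomorphic to one of the pre-Lie algebras P01–P08 (with `· ≡ 0`, the same tables as
C01–C08), or to P09^α or P10; moreover `P09^α ≅ P09^β` iff `α = β`. -/
theorem statement19 (P : Type*) [AddCommGroup P] [Module ℂ P]
    (hdim : Module.finrank ℂ P = 2)
    (zin circ : P →ₗ[ℂ] P →ₗ[ℂ] P)
    (hzin : ∀ x y z : P, zin x (zin y z) = zin (zin y x + zin x y) z)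
    (hpre : ∀ x y z : P, circ (circ x y) z - circ (circ y x) z =
      circ x (circ y z) - circ y (circ x z))
    (hcompat₁ : ∀ x y z : P, zin (circ x y - circ y x) z =
      circ x (zin y z) - zin y (circ x z))
    (hcompat₂ : ∀ x y z : P, circ (zin x y + zin y x) z =
      zin x (circ y z) + zin y (circ x z))
    (hnz : (∃ x y : P, zin x y ≠ 0) ∨ (∃ x y : P, circ x y ≠ 0)) :
    ((∃ i : PLIdx, Iso2 (fun x y => zin x y) (fun x y => circ x y)
        zm (tm (plAlg i))) ∨
     -- P09^α : e1·e1 = e2, e1∘e1 = α e2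
     (∃ α : ℂ, Iso2 (fun x y => zin x y) (fun x y => circ x y)
        (tm (tbl ![0,1] 0 0 0)) (tm (tbl ![0,α] 0 0 0))) ∨
     -- P10 : e1·e1 = e2, e1∘e1 = e1, e1∘e2 = e2, e2∘e1 = e2
     Iso2 (fun x y => zin x y) (fun x y => circ x y)
        (tm (tbl ![0,1] 0 0 0)) (tm (tbl ![1,0] ![0,1] ![0,1] 0))) ∧
    (∀ α β : ℂ, Iso2 (tm (tbl ![0,1] 0 0 0)) (tm (tbl ![0,α] 0 0 0))
        (tm (tbl ![0,1] 0 0 0)) (tm (tbl ![0,β] 0 0 0)) ↔ α = β) := by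
  refine ⟨?_, iso2_nilpotent_iff⟩
  by_cases hz : ∃ x y, zin x y ≠ 0
  · exact Or.inr (iso2_of_zinbiel_ne_zero hdim zin circ hzin hcompat₁ hcompat₂ hz)
  · left
    obtain ⟨i, u, v, hind, hcirc⟩ :=
      exists_hasMulTable_plAlg hdim circ hpre (hnz.resolve_left hz)
    push Not at hz
    refine ⟨i, ?_⟩
    rw [← tm_zero]
    exact iso2_of_mulTable hdim hind (by simp [MulTable, hz]) hcirc
end
end
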